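/- arXiv:1004.4779 — 2 statements merged into one kernel-verified Lean document; each statement's English description precedes it below -/
import Mathlib

section
/- Let M be the monoid of injective maps ℕ → ℕ under composition (with identity the identity map), let G be a group, and let φ : M → G be a monoid homomorphism. Then φ is trivial: φ(f) = 1 for every injective map f : ℕ → ℕ. -/
/-! Split an infinite set into two copies of itself. Given an injective `f`, let `h` act as `f` on
the first copy and as the identity on the second. The two inclusions semiconjugate `f` and `id`
to `h`, and in a cancellative monoid semiconjugacy preserves and reflects being `1`; so triviality
passes from the image of `id` to that of `h`, and from there to that of `f`. -/

open Function

theorem nonempty_sum_self_equiv (α : Type*) [Infinite α] : Nonempty (α ⊕ α ≃ α) :=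
  Cardinal.eq.mp <| by
    rw [← Cardinal.add_def, Cardinal.add_eq_self (Cardinal.aleph0_le_mk α)]

theorem exists_injective_semiconj_semiconj {α : Type*} [Infinite α] {f g : α → α}
    (hf : Injective f) (hg : Injective g) :
    ∃ h i j : α → α, Injective h ∧ Injective i ∧ Injective j ∧
      Semiconj i f h ∧ Semiconj j g h := by
  obtain ⟨s⟩ := nonempty_sum_self_equiv α
  have conj_injective : Injective (s.conj (Sum.map f g)) :=
    s.injective.comp ((hf.sumMap hg).comp s.symm.injective)
  have s_semiconj : Semiconj s (Sum.map f g) (s.conj (Sum.map f g)) := s.semiconj_conj _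
  exact ⟨s.conj (Sum.map f g), s ∘ Sum.inl, s ∘ Sum.inr, conj_injective,
    s.injective.comp Sum.inl_injective, s.injective.comp Sum.inr_injective,
    fun x => s_semiconj (Sum.inl x), fun x => s_semiconj (Sum.inr x)⟩

theorem semiconjBy_eq_one_iff {M : Type*} [CancelMonoid M] {a x y : M} (h : SemiconjBy a x y) :
    x = 1 ↔ y = 1 := by
  rw [← mul_eq_left (a := a), h.eq, mul_eq_right]

theorem semiconjBy_map_of_semiconj {α M : Type*} [Mul M] {φ : (α → α) → M}
    (hcomp : ∀ f g : α → α, Injective f → Injective g → φ (f ∘ g) = φ f * φ g)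
    {i f h : α → α} (hi : Injective i) (hf : Injective f) (hh : Injective h)
    (hsemi : Semiconj i f h) : SemiconjBy (φ i) (φ f) (φ h) :=
  calc φ i * φ f = φ (i ∘ f) := (hcomp i f hi hf).symm
    _ = φ (h ∘ i) := by rw [hsemi.comp_eq]
    _ = φ h * φ i := hcomp h i hh hi

theorem injective_selfmaps_monoidHom_trivial_general {α M : Type*} [Infinite α] [CancelMonoid M]
    (φ : (α → α) → M)
    (hcomp : ∀ f g : α → α, Injective f → Injective g → φ (f ∘ g) = φ f * φ g)
    {f : α → α} (hf : Injective f) : φ f = 1 := by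
  obtain ⟨h, i, j, hh, hi, hj, hif, hjid⟩ :=
    exists_injective_semiconj_semiconj hf injective_id
  have map_id : φ id = 1 := mul_eq_left.mp (hcomp id id injective_id injective_id).symm
  have map_h : φ h = 1 :=
    (semiconjBy_eq_one_iff (semiconjBy_map_of_semiconj hcomp hj injective_id hh hjid)).mp map_id
  exact (semiconjBy_eq_one_iff (semiconjBy_map_of_semiconj hcomp hi hf hh hif)).mpr map_h

/-- **Loday's trick.** Any monoid homomorphism from the monoid of injective self-maps of `ℕ`
(under composition) to a group is trivial. We encode the monoid homomorphism as a function
`φ` on all self-maps of `ℕ`, required to be multiplicative on injective maps and to send the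
identity to `1`. -/
theorem injective_selfmaps_monoidHom_trivial
    (G : Type*) [Group G] (φ : (ℕ → ℕ) → G)
    (hid : φ id = 1)
    (hcomp : ∀ f g : ℕ → ℕ, Function.Injective f → Function.Injective g →
      φ (f ∘ g) = φ f * φ g) :
    ∀ f : ℕ → ℕ, Function.Injective f → φ f = 1 :=
  fun _ hf => injective_selfmaps_monoidHom_trivial_general φ hcomp hf
end

section
/- Let A be an associative unital ring, V a left A-module, and W ⊆ V a submodule admitting a complement (a submodule W' with V = W ⊕ W' internally). Let H(W) be the group of A-module automorphisms h of V such that (id_V − h)(V) ⊆ W and W ⊆ ker(id_V − h). Then H(W) acts transitively on the set of complements of W in V: for any two submodules W'_1, W'_2 with V = W ⊕ W'_1 = W ⊕ W'_2 there exists h ∈ H(W) with h(W'_1) = W'_2. Consequently, the subgroup Elem(W ↪ V) of Aut_A(V) generated by H(W) and H(W') does not depend on the choice of complement W'. -/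
/-- For a submodule `W` of a left `A`-module `V`, the set underlying the group `H(W)` of
automorphisms `h` of `V` with `(id - h)(V) ⊆ W ⊆ ker (id - h)`. -/
def HSet {A : Type u} {V : Type v} [Ring A] [AddCommGroup V] [Module A V]
    (W : Submodule A V) : Set (V ≃ₗ[A] V) :=
  {h | (∀ v : V, h v - v ∈ W) ∧ ∀ w ∈ W, h w = w}

/-!
If `p` and `q` are the projections onto `W` along `W₁` and along `W₂`, then `φ = p - q` has image
in `W` and vanishes on `W`, so `φ ^ 2 = 0` and `h = 1 + φ` is an element of `H(W)` with inverse
`1 - φ`. On `W₁` it is `1 - q`, which takes values in `W₂`; exchanging the two complements replaces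
`h` by its inverse, so `h W₁ = W₂`. Conjugation by `h` therefore carries `H(W₁)` onto `H(W₂)`, while
it preserves every subgroup containing `h`.
-/

section

open scoped Pointwise

theorem closure_union_conj_smul {G : Type*} [Group G] {g : G} {s : Set G}
    (hg : g ∈ Subgroup.closure s) (t : Set G) :
    Subgroup.closure (s ∪ MulAut.conj g • t) = Subgroup.closure (s ∪ t) := by
  have hg' : g ∈ Subgroup.closure (s ∪ t) := Subgroup.closure_mono Set.subset_union_left hg
  calc Subgroup.closure (s ∪ MulAut.conj g • t)
      = Subgroup.closure s ⊔ MulAut.conj g • Subgroup.closure t := by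
        rw [Subgroup.closure_union, Subgroup.smul_closure]
    _ = MulAut.conj g • Subgroup.closure (s ∪ t) := by
        rw [Subgroup.closure_union, Subgroup.smul_sup, Subgroup.conj_smul_eq_self_of_mem hg]
    _ = Subgroup.closure (s ∪ t) := Subgroup.conj_smul_eq_self_of_mem hg'

variable {A V : Type*} [Ring A] [AddCommGroup V] [Module A V] {W W₁ W₂ : Submodule A V}

theorem conj_smul_HSet (g : V ≃ₗ[A] V) (W : Submodule A V) :
    MulAut.conj g • HSet W = HSet (W.map (g : V →ₗ[A] V)) := by
  ext h
  rw [Set.mem_smul_set_iff_inv_smul_mem]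
  refine and_congr (g.toEquiv.forall_congr fun v => ?_) ?_
  · simp [Submodule.mem_map_equiv]
  · simp [LinearEquiv.symm_apply_eq, Submodule.mem_map, -Submodule.mem_map_equiv]

theorem closure_HSet_union_HSet_map {h : V ≃ₗ[A] V} (hh : h ∈ HSet W) (W' : Submodule A V) :
    Subgroup.closure (HSet W ∪ HSet (W'.map (h : V →ₗ[A] V))) =
      Subgroup.closure (HSet W ∪ HSet W') := by
  rw [← conj_smul_HSet, closure_union_conj_smul (Subgroup.subset_closure hh)]

/-- The automorphism `1 + φ` of `V`, with inverse `1 - φ`, attached to an endomorphism `φ` whose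
image lies in `W` and which vanishes on `W`. -/
def shear (φ : V →ₗ[A] V) (hrange : φ.range ≤ W) (hker : W ≤ φ.ker) : V ≃ₗ[A] V :=
  have hφ : φ ∘ₗ φ = 0 := LinearMap.range_le_ker_iff.1 (hrange.trans hker)
  .ofLinearMap (.id + φ) (.id - φ)
    (by simp [LinearMap.add_comp, LinearMap.comp_sub, hφ])
    (by simp [LinearMap.sub_comp, LinearMap.comp_add, hφ])

theorem shear_apply {φ : V →ₗ[A] V} (hrange : φ.range ≤ W) (hker : W ≤ φ.ker) (v : V) :
    shear φ hrange hker v = v + φ v :=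
  rfl

theorem shear_symm_apply {φ : V →ₗ[A] V} (hrange : φ.range ≤ W) (hker : W ≤ φ.ker) (v : V) :
    (shear φ hrange hker).symm v = v - φ v :=
  rfl

theorem shear_mem_HSet {φ : V →ₗ[A] V} (hrange : φ.range ≤ W) (hker : W ≤ φ.ker) :
    shear φ hrange hker ∈ HSet W := by
  refine ⟨fun v => ?_, fun w hw => ?_⟩
  · rw [shear_apply, add_sub_cancel_left]
    exact hrange ⟨v, rfl⟩
  · rw [shear_apply, LinearMap.mem_ker.1 (hker hw), add_zero]

theorem range_projection_sub_projection_le (h₁ : IsCompl W W₁) (h₂ : IsCompl W W₂) :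
    (W.projection W₁ h₁ - W.projection W₂ h₂).range ≤ W := by
  rintro _ ⟨v, rfl⟩
  exact W.sub_mem (Submodule.projection_apply_mem h₁ v) (Submodule.projection_apply_mem h₂ v)

theorem le_ker_projection_sub_projection (h₁ : IsCompl W W₁) (h₂ : IsCompl W W₂) :
    W ≤ (W.projection W₁ h₁ - W.projection W₂ h₂).ker := fun w hw => by
  rw [LinearMap.mem_ker, LinearMap.sub_apply, Submodule.projection_apply_of_mem_left h₁ hw,
    Submodule.projection_apply_of_mem_left h₂ hw, sub_self]

/-- The element `1 + p - q` of `H(W)` carrying the complement `W₁` of `W` to the complement `W₂`,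
where `p` and `q` are the projections onto `W` along `W₁` and along `W₂`. -/
noncomputable def complementShear (h₁ : IsCompl W W₁) (h₂ : IsCompl W W₂) : V ≃ₗ[A] V :=
  shear (W.projection W₁ h₁ - W.projection W₂ h₂)
    (range_projection_sub_projection_le h₁ h₂) (le_ker_projection_sub_projection h₁ h₂)

theorem complementShear_mem_HSet (h₁ : IsCompl W W₁) (h₂ : IsCompl W W₂) :
    complementShear h₁ h₂ ∈ HSet W :=
  shear_mem_HSet _ _

theorem complementShear_symm (h₁ : IsCompl W W₁) (h₂ : IsCompl W W₂) :
    (complementShear h₁ h₂).symm = complementShear h₂ h₁ := by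
  ext v
  simp only [complementShear, shear_symm_apply, shear_apply, LinearMap.sub_apply]
  abel

theorem complementShear_apply_mem (h₁ : IsCompl W W₁) (h₂ : IsCompl W W₂) {x : V} (hx : x ∈ W₁) :
    complementShear h₁ h₂ x ∈ W₂ := by
  have hp : W.projection W₁ h₁ x = 0 := (Submodule.projection_apply_eq_zero_iff h₁).2 hx
  rw [complementShear, shear_apply, LinearMap.sub_apply, hp, zero_sub, ← sub_eq_add_neg]
  exact Submodule.sub_projection_mem h₂ x

theorem map_complementShear (h₁ : IsCompl W W₁) (h₂ : IsCompl W W₂) :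
    W₁.map (complementShear h₁ h₂ : V →ₗ[A] V) = W₂ := by
  refine le_antisymm ?_ fun y hy => ?_
  · rintro _ ⟨x, hx, rfl⟩
    exact complementShear_apply_mem h₁ h₂ hx
  · rw [Submodule.mem_map_equiv, complementShear_symm]
    exact complementShear_apply_mem h₂ h₁ hy

end

/-- `H(W)` acts transitively on the set of complements of `W`, and consequently the subgroup
`Elem(W ↪ V)` of `Aut_A(V)` generated by `H(W)` and `H(W')` does not depend on the choice of a
complement `W'` of `W`. -/
theorem HSet_transitive_on_complements_and_elem_well_defined
    {A : Type u} {V : Type v} [Ring A] [AddCommGroup V] [Module A V]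
    (W W₁ W₂ : Submodule A V) (h₁ : IsCompl W W₁) (h₂ : IsCompl W W₂) :
    (∃ h : V ≃ₗ[A] V, h ∈ HSet W ∧ W₁.map (h : V →ₗ[A] V) = W₂) ∧
    Subgroup.closure (HSet W ∪ HSet W₁) = Subgroup.closure (HSet W ∪ HSet W₂) := by
  have hmem := complementShear_mem_HSet h₁ h₂
  have hmap := map_complementShear h₁ h₂
  refine ⟨⟨complementShear h₁ h₂, hmem, hmap⟩, ?_⟩
  rw [← closure_HSet_union_HSet_map hmem W₁, hmap]
end
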